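/- Let V be the k-linear span of the set of monomials u of A with deg(u) − d(u) = 1, where for a monomial u with exponent function m we set deg(u) = Σ_{(i,r)} m(i,r) and d(u) = Σ_{(i,r)} r·m(i,r). Then the derivation D₁ maps V into V; in particular D₁ restricts to a k-linear endomorphism of the copy of the free Novikov algebra inside A. -/

import Mathlib

open MvPolynomial

/-- The weight `1 - r` of the variable `X (i, r)`. -/
def novWt : Fin 3 × ℕ → ℤ := fun p => 1 - (p.2 : ℤ)

theorem novWt_iff (m : (Fin 3 × ℕ) →₀ ℕ) :
    ((m.sum fun _ e => e) = (m.sum fun p e => p.2 * e) + 1) ↔ Finsupp.weight novWt m = 1 := by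
  have h : Finsupp.weight novWt m =
      ((m.sum fun _ e => e : ℕ) : ℤ) - ((m.sum fun p e => p.2 * e : ℕ) : ℤ) := by
    rw [Finsupp.weight_apply]
    simp only [Finsupp.sum]
    push_cast
    rw [← Finset.sum_sub_distrib]
    refine Finset.sum_congr rfl fun p _ => ?_
    simp only [novWt, nsmul_eq_mul]
    ring
  rw [h]
  omega

theorem novSpan_eq (k : Type*) [Field k] :
    Submodule.span k {u : MvPolynomial (Fin 3 × ℕ) k |
        ∃ m : (Fin 3 × ℕ) →₀ ℕ, u = monomial m 1 ∧
          (m.sum fun _ e => e) = (m.sum fun p e => p.2 * e) + 1}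
      = weightedHomogeneousSubmodule k novWt 1 := by
  apply le_antisymm
  · rw [Submodule.span_le]
    rintro u ⟨m, rfl, hm⟩
    exact isWeightedHomogeneous_monomial _ _ _ ((novWt_iff m).1 hm)
  · intro f hf
    rw [f.as_sum]
    refine Submodule.sum_mem _ fun m hm => ?_
    have h1 : monomial m (coeff m f) = coeff m f • monomial m (1 : k) := by
      rw [smul_monomial, smul_eq_mul, mul_one]
    rw [h1]
    refine Submodule.smul_mem _ _ (Submodule.subset_span ⟨m, rfl, (novWt_iff m).2 ?_⟩)
    exact hf (mem_support_iff.1 hm)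

theorem novDeriv_hom (k : Type*) [Field k]
    (d : Derivation k (MvPolynomial (Fin 3 × ℕ) k) (MvPolynomial (Fin 3 × ℕ) k))
    (hd : ∀ p, IsWeightedHomogeneous novWt (d (X p)) (novWt p)) (m : (Fin 3 × ℕ) →₀ ℕ) :
    IsWeightedHomogeneous novWt (d (monomial m 1)) (Finsupp.weight novWt m) := by
  induction m using Finsupp.induction_linear with
  | zero =>
    have h : (monomial 0 1 : MvPolynomial (Fin 3 × ℕ) k) = 1 := rfl
    rw [h, Derivation.map_one_eq_zero]
    exact isWeightedHomogeneous_zero _ _ _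
  | add a b ha hb =>
    have h : (monomial (a + b) 1 : MvPolynomial (Fin 3 × ℕ) k) = monomial a 1 * monomial b 1 := by
      rw [monomial_mul, one_mul]
    rw [h, Derivation.leibniz, map_add, smul_eq_mul, smul_eq_mul]
    refine IsWeightedHomogeneous.add ?_ ?_
    · exact (isWeightedHomogeneous_monomial _ _ _ rfl).mul hb
    · rw [add_comm]
      exact (isWeightedHomogeneous_monomial _ _ _ rfl).mul ha
  | single p n =>
    rw [← X_pow_eq_monomial, Derivation.leibniz_pow]
    rcases n with _ | n
    · rw [zero_smul]
      exact isWeightedHomogeneous_zero _ _ _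
    · have h : Finsupp.weight novWt (Finsupp.single p (n + 1)) = n • novWt p + novWt p := by
        rw [Finsupp.weight_single, succ_nsmul]
      rw [h, Nat.add_sub_cancel, smul_eq_mul]
      refine (weightedHomogeneousSubmodule k novWt _).nsmul_mem ?_ _
      exact ((isWeightedHomogeneous_X k novWt p).pow n).mul (hd p)

/-- The derivation `D₁` maps the span `V` of the monomials with `deg - d = 1`
(the copy of the free Novikov algebra inside `A`) into itself. -/
theorem D1_preserves_novikov (k : Type*) [Field k] [CharZero k]
    (δ d1 D1 : Derivation k (MvPolynomial (Fin 3 × ℕ) k) (MvPolynomial (Fin 3 × ℕ) k))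
    (hδ : ∀ (i : Fin 3) (r : ℕ), δ (X (i, r)) = X (i, r + 1))
    (hd1x : ∀ r : ℕ, d1 (X ((0 : Fin 3), r)) = 2 * X ((1 : Fin 3), r))
    (hd1y : ∀ r : ℕ, d1 (X ((1 : Fin 3), r)) = X ((2 : Fin 3), r))
    (hd1z : ∀ r : ℕ, d1 (X ((2 : Fin 3), r)) = 0)
    (w : MvPolynomial (Fin 3 × ℕ) k)
    (hw : w = X ((1 : Fin 3), (0 : ℕ)) ^ 2 - X ((0 : Fin 3), (0 : ℕ)) * X ((2 : Fin 3), (0 : ℕ)))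
    (hD1 : ∀ f : MvPolynomial (Fin 3 × ℕ) k, D1 f = C ((2 : k)⁻¹) * δ (δ w) * d1 f) :
    ∀ f ∈ Submodule.span k {u : MvPolynomial (Fin 3 × ℕ) k |
        ∃ m : (Fin 3 × ℕ) →₀ ℕ, u = monomial m 1 ∧
          (m.sum fun _ e => e) = (m.sum fun p e => p.2 * e) + 1},
      D1 f ∈ Submodule.span k {u : MvPolynomial (Fin 3 × ℕ) k |
        ∃ m : (Fin 3 × ℕ) →₀ ℕ, u = monomial m 1 ∧
          (m.sum fun _ e => e) = (m.sum fun p e => p.2 * e) + 1} := by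
  have hX := fun p => isWeightedHomogeneous_X k novWt p
  have hd : ∀ p, IsWeightedHomogeneous novWt (d1 (X p)) (novWt p) := by
    rintro ⟨i, r⟩
    fin_cases i
    · change IsWeightedHomogeneous novWt (d1 (X ((0 : Fin 3), r))) (novWt (1, r))
      rw [hd1x, two_mul]
      exact (hX (1, r)).add (hX (1, r))
    · change IsWeightedHomogeneous novWt (d1 (X ((1 : Fin 3), r))) (novWt (2, r))
      rw [hd1y]
      exact hX (2, r)
    · change IsWeightedHomogeneous novWt (d1 (X ((2 : Fin 3), r))) (novWt (2, r))
      rw [hd1z]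
      exact isWeightedHomogeneous_zero _ _ _
  have hδw : δ (δ w) = X (1, 0) * X (1, 2) + X (1, 0) * X (1, 2) + X (1, 1) * X (1, 1)
      + X (1, 1) * X (1, 1)
      - (X (0, 2) * X (2, 0) + X (0, 1) * X (2, 1) + X (0, 1) * X (2, 1) + X (0, 0) * X (2, 2)) := by
    rw [hw, pow_two]
    simp only [map_sub, map_add, Derivation.leibniz, hδ, smul_eq_mul]
    ring
  have hmul : ∀ (i j : Fin 3) (r s : ℕ), r + s = 2 →
      (X (i, r) * X (j, s) : MvPolynomial (Fin 3 × ℕ) k) ∈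
        weightedHomogeneousSubmodule k novWt 0 := by
    intro i j r s hrs
    have h0 : novWt (i, r) + novWt (j, s) = 0 := by
      simp only [novWt]
      omega
    rw [← h0]
    exact (hX (i, r)).mul (hX (j, s))
  have hw0 : IsWeightedHomogeneous novWt (δ (δ w)) 0 := by
    rw [hδw]
    change _ ∈ weightedHomogeneousSubmodule k novWt 0
    refine Submodule.sub_mem _ (Submodule.add_mem _ (Submodule.add_mem _ (Submodule.add_mem _ ?_ ?_) ?_) ?_)
      (Submodule.add_mem _ (Submodule.add_mem _ (Submodule.add_mem _ ?_ ?_) ?_) ?_) <;>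
    exact hmul _ _ _ _ rfl
  intro f hf
  refine Submodule.span_induction (p := fun f _ => D1 f ∈ _) ?_ ?_ ?_ ?_ hf
  · rintro u ⟨m, rfl, hm⟩
    rw [novSpan_eq, hD1]
    have h1 := novDeriv_hom k d1 hd m
    rw [(novWt_iff m).1 hm] at h1
    have h2 := ((isWeightedHomogeneous_C novWt ((2 : k)⁻¹)).mul hw0).mul h1
    rw [zero_add, zero_add] at h2
    exact h2
  · rw [map_zero]
    exact Submodule.zero_mem _
  · intro a b _ _ ha hb
    rw [map_add]
    exact Submodule.add_mem _ ha hb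
  · intro c a _ ha
    rw [Derivation.map_smul]
    exact Submodule.smul_mem _ _ ha
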